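/- Let F be a finite field with q elements and let d > 1 be an integer. Assume (d, q) ≠ (2, 2), (d, q) ≠ (2, 3), and that d and q − 1 have a common divisor greater than 1. Then there does not exist a surjective group homomorphism from PGL(d, q) onto PSL(d, q). -/

import Mathlib

open Function Matrix

universe u

/-- The projective general linear group `PGL(d, F)`: the quotient of `GL(d, F)` by its
center (the subgroup of scalar matrices). -/
abbrev ProjGL (d : ℕ) (F : Type u) [Field F] : Type u :=
  Matrix.GeneralLinearGroup (Fin d) F ⧸ Subgroup.center (Matrix.GeneralLinearGroup (Fin d) F)

open scoped MatrixGroups commutatorElement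

open Matrix.SpecialLinearGroup in
lemma diag2n_decompose_aux {F : Type u} [Field F] {ι : Type*} [Fintype ι] [DecidableEq ι]
    {i j : ι} (hij : i ≠ j) (a : F) (ha : a ≠ 0) :
    diag2n hij a ha = SpecialLinearGroup.transvection hij a *
      SpecialLinearGroup.transvection hij.symm (- a⁻¹) *
      SpecialLinearGroup.transvection hij a *
      SpecialLinearGroup.transvection hij (-1) *
      SpecialLinearGroup.transvection hij.symm 1 *
      SpecialLinearGroup.transvection hij (-1) := by
  have h1 : (diagonal (fun k ↦ if k = i then a else if k = j then a⁻¹ else 1) : Matrix ι ι F)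
      = 1 + single i i (a - 1) + single j j (a⁻¹ - 1) := by
    ext k l
    simp only [diagonal_apply, Matrix.add_apply, one_apply, single_apply]
    grind
  apply coeMonoidHom_injective
  simp only [map_mul, coeMonoidHom_apply, transvection_coe]
  rw [show ((diag2n hij a ha : SpecialLinearGroup ι F) : Matrix ι ι F) = _ from diag2n_coe hij a ha, h1]
  have hs : ∀ (k l : ι) (b : F), single k l b = b • single k l (1 : F) := by
    intro k l b
    rw [smul_single, smul_eq_mul, mul_one]
  rw [hs i i (a - 1), hs j j (a⁻¹ - 1), hs i j a, hs i j (-1), hs j i (-a⁻¹)]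
  have tijij : single i j (1 : F) * single i j 1 = 0 :=
    single_mul_single_of_ne _ _ _ _ hij.symm _
  have tijji : single i j (1 : F) * single j i 1 = single i i 1 := by simp
  have tijii : single i j (1 : F) * single i i 1 = 0 :=
    single_mul_single_of_ne _ _ _ _ hij.symm _
  have tijjj : single i j (1 : F) * single j j 1 = single i j 1 := by simp
  have tjiij : single j i (1 : F) * single i j 1 = single j j 1 := by simp
  have tjiji : single j i (1 : F) * single j i 1 = 0 :=
    single_mul_single_of_ne _ _ _ _ hij _
  have tjiii : single j i (1 : F) * single i i 1 = single j i 1 := by simp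
  have tjijj : single j i (1 : F) * single j j 1 = 0 :=
    single_mul_single_of_ne _ _ _ _ hij _
  have tiiij : single i i (1 : F) * single i j 1 = single i j 1 := by simp
  have tiiji : single i i (1 : F) * single j i 1 = 0 :=
    single_mul_single_of_ne _ _ _ _ hij _
  have tiiii : single i i (1 : F) * single i i 1 = single i i 1 := by simp
  have tiijj : single i i (1 : F) * single j j 1 = 0 :=
    single_mul_single_of_ne _ _ _ _ hij _
  have tjjij : single j j (1 : F) * single i j 1 = 0 :=
    single_mul_single_of_ne _ _ _ _ hij.symm _
  have tjjji : single j j (1 : F) * single j i 1 = single j i 1 := by simp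
  have tjjii : single j j (1 : F) * single i i 1 = 0 :=
    single_mul_single_of_ne _ _ _ _ hij.symm _
  have tjjjj : single j j (1 : F) * single j j 1 = single j j 1 := by simp
  generalize single i j (1 : F) = eij at *
  generalize single j i (1 : F) = eji at *
  generalize single i i (1 : F) = eii at *
  generalize single j j (1 : F) = ejj at *
  simp only [mul_add, add_mul, mul_one, one_mul, smul_mul_assoc, mul_smul_comm,
    tijij, tijji, tijii, tijjj, tjiij, tjiji, tjiii, tjijj, tiiij, tiiji, tiiii, tiijj, tjjij, tjjji, tjjii, tjjjj,
    smul_zero, zero_mul, mul_zero]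
  match_scalars <;> field_simp <;> ring

open Matrix.SpecialLinearGroup in
open scoped commutatorElement in
lemma transvection_commutator_aux {F : Type u} [Field F] {ι : Type*} [Fintype ι] [DecidableEq ι]
    {i j k : ι} (hij : i ≠ j) (hik : i ≠ k) (hkj : k ≠ j) (a : F) :
    ⁅SpecialLinearGroup.transvection hik a, SpecialLinearGroup.transvection hkj 1⁆ =
      SpecialLinearGroup.transvection hij a := by
  rw [commutatorElement_def, SpecialLinearGroup.transvection_inv,
    SpecialLinearGroup.transvection_inv]
  apply coeMonoidHom_injective
  simp only [map_mul, coeMonoidHom_apply, transvection_coe]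
  simp [mul_add, add_mul, single_mul_single_of_ne _ _ _ _ hij.symm,
    single_mul_single_of_ne _ _ _ _ hik.symm, single_mul_single_of_ne _ _ _ _ hkj.symm]
  ext x y
  simp only [Matrix.add_apply, Matrix.one_apply, single_apply, Matrix.zero_apply]
  grind

open Matrix.SpecialLinearGroup in
lemma SL_isPerfect_aux {F : Type u} [Field F] [Fintype F] (d : ℕ) (hd : 1 < d)
    (h : d = 2 → 4 ≤ Nat.card F) :
    Group.IsPerfect (SpecialLinearGroup (Fin d) F) := by
  by_cases hd2 : d = 2
  · subst hd2
    have hF := h rfl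
    have : ∃ a : F, a ≠ 0 ∧ a ^ 2 ≠ 1 := by
      obtain ⟨x, hx⟩ : IsCyclic Fˣ := by infer_instance
      refine ⟨x, Units.ne_zero x, fun h ↦ ?_⟩
      grw [Nat.card_eq_card_units_add_one F, ← orderOf_eq_card_of_forall_mem_zpowers hx,
        orderOf_le_of_pow_eq_one zero_lt_two (Units.ext <| by simpa using h)] at hF
      omega
    obtain ⟨a, ha, ha2⟩ := this
    exact ⟨SL2.commutator_eq_top ha ha2⟩
  · have : Nontrivial (Fin d) := Fin.nontrivial_iff_two_le.2 hd
    have ht : ∀ (i j : Fin d) (hij : i ≠ j) (a : F),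
        SpecialLinearGroup.transvection hij a ∈ commutator (SpecialLinearGroup (Fin d) F) := by
      intro i j hij a
      obtain ⟨k, hk⟩ : ∃ k, k ∉ ({i, j} : Finset (Fin d)) := by
        by_contra hcon
        push Not at hcon
        have h1 : (Finset.univ : Finset (Fin d)) ⊆ {i, j} := fun x _ => hcon x
        have := Finset.card_le_card h1
        have := Finset.card_le_two (a := i) (b := j)
        simp at *
        omega
      simp only [Finset.mem_insert, Finset.mem_singleton, not_or] at hk
      rw [← transvection_commutator_aux hij (Ne.symm hk.1) hk.2 a]
      exact Subgroup.commutator_mem_commutator (Subgroup.mem_top _) (Subgroup.mem_top _)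
    refine ⟨top_le_iff.1 fun A _ => ?_⟩
    refine diagonal_transvection_induction' (· ∈ commutator _) A (fun i j hij c hc => ?_) ht
      (fun _ _ => mul_mem)
    rw [diag2n_decompose_aux]
    refine mul_mem (mul_mem (mul_mem (mul_mem (mul_mem ?_ ?_) ?_) ?_) ?_) ?_
    all_goals exact ht _ _ _ _

/-- An element of `GL` commuting with `SL` modulo the center is central. -/
lemma mem_center_aux {F : Type u} [Field F] (d : ℕ)
    [Group.IsPerfect (SpecialLinearGroup (Fin d) F)] (K : Subgroup (GL (Fin d) F))
    (hK : ⁅K, (SpecialLinearGroup.toGL (n := Fin d) (R := F)).range⁆ ≤ Subgroup.center _) :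
    K ≤ Subgroup.center _ := by
  set S := (SpecialLinearGroup.toGL (n := Fin d) (R := F)).range with hS
  have hSp : Group.IsPerfect S := Group.IsPerfect.range _
  have h1 : ⁅⁅S, S⁆, K⁆ = ⊥ := by
    apply Subgroup.commutator_commutator_eq_bot_of_rotate
    · rw [Subgroup.commutator_comm S K, Subgroup.commutator_eq_bot_iff_le_centralizer]
      exact hK.trans (Subgroup.center_le_centralizer _)
    · rw [Subgroup.commutator_eq_bot_iff_le_centralizer]
      exact hK.trans (Subgroup.center_le_centralizer _)
  rw [Subgroup.commutator_eq_self, Subgroup.commutator_comm,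
    Subgroup.commutator_eq_bot_iff_le_centralizer] at h1
  intro g hg
  rw [GeneralLinearGroup.mem_center_iff_val_mem_range_scalar]
  refine Matrix.mem_range_scalar_of_commute_transvectionStruct fun t ↦ ?_
  have := Subgroup.mem_centralizer_iff.1 (h1 hg)
    (SpecialLinearGroup.toGL t.toSpecialLinearGroup) ⟨_, rfl⟩
  exact congrArg Units.val this

/-- Every commutator in `PGL` lies in the image of `PSL`. -/
lemma commutator_mem_aux {F : Type u} [Field F] (d : ℕ)
    (ψ : ProjectiveSpecialLinearGroup (Fin d) F →* ProjGL d F)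
    (hψ : ∀ T : SpecialLinearGroup (Fin d) F, ψ (QuotientGroup.mk T) =
      QuotientGroup.mk (SpecialLinearGroup.toGL T)) :
    commutator (ProjGL d F) ≤ ψ.range := by
  rw [commutator_def, Subgroup.commutator_le]
  intro g _ h _
  obtain ⟨A, rfl⟩ := QuotientGroup.mk_surjective g
  obtain ⟨B, rfl⟩ := QuotientGroup.mk_surjective h
  have hdet : (⁅A, B⁆ : GL (Fin d) F).val.det = 1 := by
    have : GeneralLinearGroup.det (⁅A, B⁆ : GL (Fin d) F) = 1 := by
      rw [map_commutatorElement, commutatorElement_eq_one_iff_mul_comm, mul_comm]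
    exact congrArg Units.val this
  refine ⟨QuotientGroup.mk ⟨_, hdet⟩, ?_⟩
  refine (hψ _).trans ?_
  have : SpecialLinearGroup.toGL (⟨_, hdet⟩ : SpecialLinearGroup (Fin d) F) = ⁅A, B⁆ :=
    Units.ext rfl
  rw [this]
  rfl

/-- Let `F` be a finite field with `q` elements and `d > 1` with `(d, q) ≠ (2, 2), (2, 3)` and
`gcd(d, q - 1) > 1`. Then there is no surjective group homomorphism from `PGL(d, q)` onto
`PSL(d, q)`. -/
theorem no_surjection_pgl_to_psl {F : Type u} [Field F] [Fintype F] (q d : ℕ)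
    (hq : Fintype.card F = q) (hd : 1 < d)
    (h22 : ¬(d = 2 ∧ q = 2)) (h23 : ¬(d = 2 ∧ q = 3))
    (hgcd : 1 < Nat.gcd d (q - 1)) :
    ¬∃ φ : ProjGL d F →* Matrix.ProjectiveSpecialLinearGroup (Fin d) F,
      Surjective φ := by
  rintro ⟨φ, hφ⟩
  have hperf : Group.IsPerfect (SpecialLinearGroup (Fin d) F) := by
    refine SL_isPerfect_aux d hd fun h => ?_
    have : 1 < Fintype.card F := Fintype.one_lt_card
    rw [Nat.card_eq_fintype_card]
    omega
  have : Finite (SpecialLinearGroup (Fin d) F) := Subtype.finite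
  have : Finite (ProjectiveSpecialLinearGroup (Fin d) F) := Quotient.finite _
  let ψ : ProjectiveSpecialLinearGroup (Fin d) F →* ProjGL d F :=
    ProjectiveSpecialLinearGroup.toPGL
  have hψ : ∀ T : SpecialLinearGroup (Fin d) F, ψ (QuotientGroup.mk T) =
      QuotientGroup.mk (SpecialLinearGroup.toGL T) := fun T => rfl
  have hcomm := commutator_mem_aux d ψ hψ
  -- the composite is surjective, hence injective
  have hsurj : Surjective (φ.comp ψ) := by
    rw [← MonoidHom.range_eq_top, ← top_le_iff,
      ← (Group.IsPerfect.commutator_eq_top (G := ProjectiveSpecialLinearGroup (Fin d) F)),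
      commutator_def, ← MonoidHom.range_eq_top_of_surjective φ hφ, MonoidHom.range_eq_map φ,
      ← Subgroup.map_commutator, MonoidHom.range_comp]
    exact Subgroup.map_mono hcomm
  have hinj : Injective (φ.comp ψ) := Finite.injective_iff_surjective.2 hsurj
  -- the kernel is trivial
  have hker : φ.ker.comap (QuotientGroup.mk' (Subgroup.center (GL (Fin d) F))) ≤
      Subgroup.center _ := by
    apply mem_center_aux
    rw [Subgroup.commutator_le]
    rintro A hA _ ⟨T, rfl⟩
    rw [← QuotientGroup.eq_one_iff]
    have hA1 : φ (QuotientGroup.mk A) = 1 := hA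
    have h1 : ((⁅A, SpecialLinearGroup.toGL T⁆ : GL (Fin d) F) : ProjGL d F) =
        ⁅(QuotientGroup.mk A : ProjGL d F), QuotientGroup.mk (SpecialLinearGroup.toGL T)⁆ := rfl
    obtain ⟨y, hy⟩ : ((⁅A, SpecialLinearGroup.toGL T⁆ : GL (Fin d) F) : ProjGL d F) ∈ ψ.range := by
      rw [h1]
      exact hcomm (Subgroup.commutator_mem_commutator (Subgroup.mem_top _) (Subgroup.mem_top _))
    have h2 : φ.comp ψ y = 1 := by
      rw [MonoidHom.comp_apply, hy, h1, map_commutatorElement, hA1, commutatorElement_one_left]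
    have h3 : y = 1 := hinj (by rw [h2, map_one])
    rw [← hy, h3, map_one]
  have hφinj : Injective φ := by
    rw [injective_iff_map_eq_one]
    intro g hg
    obtain ⟨A, rfl⟩ := QuotientGroup.mk_surjective g
    exact (QuotientGroup.eq_one_iff _).2 (hker hg)
  have hψsurj : Surjective (ProjectiveSpecialLinearGroup.toPGL (n := Fin d) (R := F)) := by
    intro g
    obtain ⟨y, hy⟩ := hsurj (φ g)
    exact ⟨y, hφinj hy⟩
  have : Nonempty (Fin d) := ⟨⟨0, by omega⟩⟩
  have hroots := (ProjectiveSpecialLinearGroup.toPGL_surj_iff).1 hψsurj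
  rw [Fintype.card_fin] at hroots
  -- the `d`-th power map on the units is then bijective
  have hpinj : Injective (powMonoidHom d : Fˣ →* Fˣ) :=
    Finite.injective_iff_surjective.2 fun r => hroots r
  obtain ⟨x, hx⟩ : IsCyclic Fˣ := inferInstance
  have hord : orderOf x = q - 1 := by
    rw [orderOf_eq_card_of_forall_mem_zpowers hx, ← hq, Nat.card_units,
      Nat.card_eq_fintype_card]
  have hcop : (x ^ ((q - 1) / Nat.gcd d (q - 1))) = 1 := by
    apply hpinj
    simp only [powMonoidHom_apply, one_pow]
    rw [← pow_mul, ← orderOf_dvd_iff_pow_eq_one, hord]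
    calc q - 1 = (q - 1) / Nat.gcd d (q - 1) * Nat.gcd d (q - 1) :=
          (Nat.div_mul_cancel (Nat.gcd_dvd_right d (q - 1))).symm
      _ ∣ _ := Nat.mul_dvd_mul_left _ (Nat.gcd_dvd_left d (q - 1))
  rw [← orderOf_dvd_iff_pow_eq_one, hord] at hcop
  have h1q : 1 < Fintype.card F := Fintype.one_lt_card
  have hpos : 0 < (q - 1) / Nat.gcd d (q - 1) :=
    Nat.div_pos (Nat.le_of_dvd (by omega) (Nat.gcd_dvd_right d (q - 1))) (by omega)
  have := Nat.le_of_dvd hpos hcop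
  have := Nat.div_lt_self (show 0 < q - 1 by omega) hgcd
  omega
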